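/- Let s and t be coprime positive integers. Every orbit of the cyclic rotation action of Z_{s+t} on words with exactly s letters S and t letters T has exactly s+t distinct words. -/

import Mathlib

/-!
A word `w` fixed by rotation by `p`, where `p` divides its length, is a block of length `p` repeated
`m = w.length / p` times (`count_eq_mul_of_append_comm`), so `m` divides the number of occurrences of
every letter. Take `p` to be the minimal period of `w` under rotation by one letter: it divides the
length `s + t`, so `m` divides both `s` and `t`, and coprimality gives `m = 1`. Hence the minimal period
is `s + t`, and the first `s + t` rotations are pairwise distinct.
-/

inductive Letter | S | T
deriving DecidableEq, Repr

open Letter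

/-- Number of occurrences of `u` as a (not necessarily contiguous) subsequence of `w`. -/
def cnt (u w : List Letter) : ℕ := w.sublists.count u

/-- If `v` commutes with `u` and is `m` times as long, then `v` is `u` repeated `m` times; this records
the consequence for letter counts. -/
theorem count_eq_mul_of_append_comm {α : Type*} [DecidableEq α] (a : α) (u : List α) (m : ℕ) :
    ∀ v : List α, u ++ v = v ++ u → v.length = m * u.length → v.count a = m * u.count a := by
  induction m with
  | zero =>
    intro v _ hl
    have : v = [] := List.length_eq_zero_iff.mp (by simpa using hl)
    simp [this]
  | succ m ih =>
    intro v h hl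
    -- `u` and `v` are prefixes of the same word and `v` is the longer one, so `v` starts with `u`.
    obtain ⟨v', rfl⟩ : u <+: v :=
      List.prefix_of_prefix_length_le (List.prefix_append u v) (h ▸ List.prefix_append v u)
        (by rw [hl]; nlinarith)
    have h' : u ++ v' = v' ++ u := by simpa [List.append_assoc] using h
    have hl' : v'.length = m * u.length := by
      rw [List.length_append] at hl
      linarith
    rw [List.count_append, ih v' h' hl']
    ring

theorem iterate_rotate_one {α : Type*} (w : List α) (n : ℕ) :
    (fun l : List α => l.rotate 1)^[n] w = w.rotate n := by
  induction n with
  | zero => simp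
  | succ n ih => rw [Function.iterate_succ_apply', ih, List.rotate_rotate]

theorem dvd_count_of_rotate_eq {α : Type*} [DecidableEq α] (a : α) (w : List α) (p m : ℕ)
    (hp : w.rotate p = w) (hm : 0 < m) (hl : w.length = p * m) : m ∣ w.count a := by
  obtain ⟨k, rfl⟩ : ∃ k, m = k + 1 := ⟨m - 1, by omega⟩
  have hpl : p ≤ w.length := by rw [hl]; nlinarith
  rw [List.rotate_eq_drop_append_take hpl] at hp
  have hcomm : w.take p ++ w.drop p = w.drop p ++ w.take p := by rw [List.take_append_drop, hp]
  have hcount := count_eq_mul_of_append_comm a (w.take p) k (w.drop p) hcomm (by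
    rw [List.length_drop, List.length_take, min_eq_left hpl, hl, Nat.mul_succ, Nat.add_sub_cancel,
      Nat.mul_comm])
  refine ⟨(w.take p).count a, ?_⟩
  conv_lhs => rw [← List.take_append_drop p w]
  rw [List.count_append, hcount]
  ring

theorem length_eq_count_add_count (w : List Letter) : w.length = w.count S + w.count T := by
  induction w with
  | nil => rfl
  | cons x w ih => cases x <;> simp [ih] <;> omega

theorem stmt5 (s t : ℕ) (hs : 0 < s) (ht : 0 < t) (hst : Nat.Coprime s t)
    (w : List Letter) (hS : w.count S = s) (hT : w.count T = t) :
    (Finset.image (fun n : Fin (s + t) => w.rotate n) Finset.univ).card = s + t := by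
  have hlen : w.length = s + t := by rw [length_eq_count_add_count, hS, hT]
  have hmin : Function.minimalPeriod (fun l : List Letter => l.rotate 1) w = s + t := by
    have hper : Function.IsPeriodicPt (fun l : List Letter => l.rotate 1) (s + t) w := by
      rw [Function.IsPeriodicPt, Function.IsFixedPt, iterate_rotate_one, ← hlen,
        List.rotate_length]
    obtain ⟨m, hm⟩ := hper.minimalPeriod_dvd
    have hrot := Function.iterate_minimalPeriod (f := fun l : List Letter => l.rotate 1) (x := w)
    rw [iterate_rotate_one] at hrot
    have hm0 : 0 < m := by
      rcases Nat.eq_zero_or_pos m with rfl | h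
      · omega
      · exact h
    have hdvd := fun a => dvd_count_of_rotate_eq a w _ m hrot hm0 (hlen.trans hm)
    have hm1 : m = 1 := Nat.eq_one_of_dvd_coprimes hst (hS ▸ hdvd S) (hT ▸ hdvd T)
    rw [hm, hm1, mul_one]
  rw [Finset.card_image_of_injective, Finset.card_univ, Fintype.card_fin]
  intro i j hij
  apply Fin.ext
  apply Function.iterate_injOn_Iio_minimalPeriod (f := fun l : List Letter => l.rotate 1) (x := w)
  · rw [hmin]; exact i.2
  · rw [hmin]; exact j.2
  · simpa only [iterate_rotate_one] using hij
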